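/- The polynomial p(x) = x^4 - 4x^3 + 46x^2 - 148x + 1369 is irreducible over the rationals and its Galois group over ℚ is the dihedral group of order 8. -/

import Mathlib

open Polynomial

/-- The characteristic polynomial of Frobenius at 37 for the Jacobian of
`y² = x(x-1)(x+1)(x-1/7)(x+6/7)`. -/
noncomputable def pFrob37 : Polynomial ℚ :=
  X ^ 4 - 4 * X ^ 3 + 46 * X ^ 2 - 148 * X + C 1369

noncomputable def pZ : Polynomial ℤ := X ^ 4 - 4 * X ^ 3 + 46 * X ^ 2 - 148 * X + C 1369

def dihHom : DihedralGroup 4 →* Equiv.Perm (ZMod 4) where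
  toFun g := match g with
    | .r i => Equiv.addRight i
    | .sr i => (Equiv.addRight i).trans (Equiv.neg _)
  map_one' := by decide
  map_mul' := by decide

theorem dihHom_inj : Function.Injective dihHom := by decide

theorem fac24 : (24:ℕ).factorization 2 = 3 := by
  rw [show 24 = 2^3*3 by norm_num, Nat.factorization_mul (by norm_num) (by norm_num)]
  rw [Finsupp.add_apply, Nat.Prime.factorization_pow Nat.prime_two]
  simp [Nat.factorization_eq_zero_of_not_dvd]

theorem monicZ : pZ.Monic := by unfold pZ; monicity!
theorem degZ : pZ.natDegree = 4 := by unfold pZ; compute_degree!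
theorem mapZ : pZ.map (algebraMap ℤ ℚ) = pFrob37 := by
  simp [pZ, pFrob37]
  rfl

theorem irr3 : Irreducible (pZ.map (Int.castRingHom (ZMod 3))) := by
  have e : pZ.map (Int.castRingHom (ZMod 3)) = X ^ 4 - X ^ 3 + X ^ 2 - X + 1 := by
    have h : (3 : (ZMod 3)[X]) = 0 := by
      exact_mod_cast (CharP.cast_eq_zero (ZMod 3)[X] 3)
    simp [pZ]
    linear_combination (-X^3 + 15 * X^2 - 49 * X + 456) * h
  have hm := monicZ.map (Int.castRingHom (ZMod 3))
  rw [e] at hm ⊢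
  have hd : (X ^ 4 - X ^ 3 + X ^ 2 - X + 1 : (ZMod 3)[X]).natDegree = 4 := by compute_degree!
  rw [hm.irreducible_iff_natDegree']
  refine ⟨fun h => by rw [h] at hd; simp at hd, ?_⟩
  rintro f g hf hg hfg hmem
  rw [hd] at hmem
  simp only [Nat.reduceDiv, Finset.mem_Ioc] at hmem
  have hdeg : f.natDegree + g.natDegree = 4 := by rw [← hf.natDegree_mul hg, hfg, hd]
  have h12 : g.natDegree = 1 ∨ g.natDegree = 2 := by omega
  rcases h12 with h1 | h2
  · have hg' := hg.as_sum
    rw [h1] at hg'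
    simp only [Finset.sum_range_succ, Finset.sum_range_zero, pow_zero, pow_one, mul_one,
      zero_add] at hg'
    generalize g.coeff 0 = a at hg'
    have := congrArg (eval (-a)) hfg
    rw [hg'] at this
    simp only [eval_mul, eval_add, eval_sub, eval_X, eval_C, eval_pow, eval_one] at this
    rw [neg_add_cancel, mul_zero] at this
    clear hg'
    revert this
    revert a
    decide
  · have hg' := hg.as_sum
    have hf' := hf.as_sum
    rw [h2] at hg'
    rw [show f.natDegree = 2 by omega] at hf'
    simp only [Finset.sum_range_succ, Finset.sum_range_zero, pow_zero, pow_one, mul_one,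
      zero_add] at hg' hf'
    generalize g.coeff 0 = b at hg'
    generalize g.coeff 1 = a at hg'
    generalize f.coeff 0 = d at hf'
    generalize f.coeff 1 = c at hf'
    have key : f * g = X ^ 4 + C (a + c) * X ^ 3 + C (b + d + a * c) * X ^ 2
        + C (a * d + b * c) * X + C (b * d) := by
      rw [hf', hg']
      simp only [C_add, C_mul]
      ring
    rw [hfg] at key
    have k0 := congrArg (fun q => coeff q 0) key
    have k1 := congrArg (fun q => coeff q 1) key
    have k2 := congrArg (fun q => coeff q 2) key
    have k3 := congrArg (fun q => coeff q 3) key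
    simp [-map_add, -map_mul, coeff_X, coeff_one, coeff_C, coeff_C_mul, coeff_X_pow] at k0 k1 k2 k3
    clear key hf' hg'
    revert a b c d
    decide

theorem irr : Irreducible pFrob37 := by
  rw [← mapZ, ← monicZ.irreducible_iff_irreducible_map_fraction_map]
  exact monicZ.irreducible_of_irreducible_map (Int.castRingHom (ZMod 3)) _ irr3

theorem deg37 : pFrob37.natDegree = 4 := by unfold pFrob37; compute_degree!

theorem iso_of_card (h : Nat.card pFrob37.Gal = 8) :
    Nonempty (pFrob37.Gal ≃* DihedralGroup 4) := by
  classical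
  have hs : (pFrob37.map (algebraMap ℚ ℂ)).Splits := IsAlgClosed.splits _
  have : Fact ((pFrob37.map (algebraMap ℚ ℂ)).Splits) := ⟨hs⟩
  have hc : Fintype.card (pFrob37.rootSet ℂ) = Fintype.card (ZMod 4) := by
    rw [card_rootSet_eq_natDegree irr.separable hs, deg37]; rfl
  let e := Fintype.equivOfCardEq hc
  let φ : pFrob37.Gal →* Equiv.Perm (ZMod 4) :=
    e.permCongrHom.toMonoidHom.comp (Gal.galActionHom pFrob37 ℂ)
  have hφ : Function.Injective φ :=
    e.permCongrHom.injective.comp (Gal.galActionHom_injective pFrob37 ℂ)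
  have hP : Nat.card (Equiv.Perm (ZMod 4)) = 24 := by
    rw [Nat.card_eq_fintype_card, Fintype.card_perm]; rfl
  have h1 : Nat.card φ.range = 2 ^ (Nat.card (Equiv.Perm (ZMod 4))).factorization 2 := by
    rw [hP, fac24, ← Nat.card_congr (MonoidHom.ofInjective hφ).toEquiv, h]; rfl
  have h2 : Nat.card dihHom.range = 2 ^ (Nat.card (Equiv.Perm (ZMod 4))).factorization 2 := by
    rw [hP, fac24, ← Nat.card_congr (MonoidHom.ofInjective dihHom_inj).toEquiv,
      DihedralGroup.nat_card]; rfl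
  exact ⟨(MonoidHom.ofInjective hφ).trans
    ((Sylow.equiv (Sylow.ofCard _ h1) (Sylow.ofCard _ h2)).trans
      (MonoidHom.ofInjective dihHom_inj).symm)⟩

open IntermediateField in
theorem finrank_two {K L : Type*} [Field K] [Field L] [Algebra K L] (x : L) (a : K)
    (hx : x ^ 2 = algebraMap K L a) (hn : x ∉ (algebraMap K L).range) :
    Module.finrank K K⟮x⟯ = 2 := by
  have hm : (X ^ 2 - C a : K[X]).Monic := monic_X_pow_sub_C a two_ne_zero
  have hr : aeval x (X ^ 2 - C a : K[X]) = 0 := by simp [hx]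
  have hi : IsIntegral K x := ⟨_, hm, hr⟩
  rw [adjoin.finrank hi]
  have h1 := (minpoly.two_le_natDegree_iff hi).2 hn
  have h2 := natDegree_le_of_dvd (minpoly.dvd K x hr) hm.ne_zero
  rw [natDegree_X_pow_sub_C] at h2
  omega

noncomputable def sC : ℂ := ((√2 : ℝ) : ℂ)
noncomputable def tC : ℂ := ((√47 : ℝ) : ℂ)
noncomputable def bC : ℂ := ((√(7 - √2) : ℝ) : ℂ) * Complex.I
noncomputable def cC : ℂ := ((√(7 + √2) : ℝ) : ℂ) * Complex.I

theorem sqrt2_lt : √2 < 7 := by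
  rw [Real.sqrt_lt' (by norm_num)]; norm_num

theorem sC_sq : sC ^ 2 = 2 := by
  unfold sC; norm_cast; rw [Real.sq_sqrt (by norm_num)]
theorem tC_sq : tC ^ 2 = 47 := by
  unfold tC; norm_cast; rw [Real.sq_sqrt (by norm_num)]
theorem bC_sq : bC ^ 2 = -7 + sC := by
  unfold bC sC
  rw [mul_pow, Complex.I_sq, ← Complex.ofReal_pow, Real.sq_sqrt (by linarith [sqrt2_lt])]
  push_cast; ring
theorem cC_sq : cC ^ 2 = -7 - sC := by
  unfold cC sC
  rw [mul_pow, Complex.I_sq, ← Complex.ofReal_pow, Real.sq_sqrt (by positivity)]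
  push_cast; ring
theorem bc : bC * cC = - tC := by
  have : √(7 - √2) * √(7 + √2) = √47 := by
    rw [← Real.sqrt_mul (by linarith [sqrt2_lt])]
    congr 1
    have := Real.sq_sqrt (show (0:ℝ) ≤ 2 by norm_num)
    linear_combination -this
  unfold bC cC tC
  rw [← this]
  push_cast
  linear_combination ((√(7 - √2) : ℝ) : ℂ) * ((√(7 + √2) : ℝ) : ℂ) * Complex.I_sq

theorem root_iff (x : ℂ) : x ∈ pFrob37.rootSet ℂ ↔
    x = 1 + 2 * sC + 2 * bC ∨ x = 1 + 2 * sC - 2 * bC ∨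
    x = 1 - 2 * sC + 2 * cC ∨ x = 1 - 2 * sC - 2 * cC := by
  have hc : aeval x pFrob37 = (x - (1 + 2 * sC + 2 * bC)) * (x - (1 + 2 * sC - 2 * bC)) *
      ((x - (1 - 2 * sC + 2 * cC)) * (x - (1 - 2 * sC - 2 * cC))) := by
    have e1 : (x - (1 + 2 * sC + 2 * bC)) * (x - (1 + 2 * sC - 2 * bC)) =
        x ^ 2 - (2 + 4 * sC) * x + 37 := by
      linear_combination (-4) * bC_sq + 4 * sC_sq
    have e2 : (x - (1 - 2 * sC + 2 * cC)) * (x - (1 - 2 * sC - 2 * cC)) =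
        x ^ 2 - (2 - 4 * sC) * x + 37 := by
      linear_combination (-4) * cC_sq + 4 * sC_sq
    rw [e1, e2]
    simp only [pFrob37, map_add, map_sub, map_mul, map_pow, aeval_X, map_ofNat]
    linear_combination 16 * x ^ 2 * sC_sq
  rw [mem_rootSet_of_ne irr.ne_zero, hc]
  simp only [mul_eq_zero, sub_eq_zero, or_assoc]

theorem no_rat_sq (n : ℕ) (hn : ¬ IsSquare n) (u : ℚ) : u ^ 2 ≠ n := by
  intro h
  apply hn
  have : IsSquare ((n : ℕ) : ℚ) := ⟨u, by rw [← h, sq]⟩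
  exact Rat.isSquare_natCast_iff.1 this

open IntermediateField in
theorem mem_Qs (x : ℂ) (hx : x ∈ ℚ⟮sC⟯) : ∃ u v : ℚ, x = u + v * sC := by
  induction hx using adjoin_induction with
  | mem x hx => exact ⟨0, 1, by simpa using hx⟩
  | algebraMap q => exact ⟨q, 0, by simp⟩
  | add x y _ _ h1 h2 =>
    obtain ⟨u, v, rfl⟩ := h1
    obtain ⟨u', v', rfl⟩ := h2
    exact ⟨u + u', v + v', by push_cast; ring⟩
  | mul x y _ _ h1 h2 =>
    obtain ⟨u, v, rfl⟩ := h1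
    obtain ⟨u', v', rfl⟩ := h2
    exact ⟨u * u' + 2 * v * v', u * v' + v * u', by
      push_cast; linear_combination (v * v' : ℂ) * sC_sq⟩
  | inv x _ h1 =>
    obtain ⟨u, v, rfl⟩ := h1
    by_cases h0 : u ^ 2 - 2 * v ^ 2 = 0
    · have hv : v = 0 := by
        by_contra hv
        refine no_rat_sq 2 (by decide +kernel) (u / v) ?_
        field_simp
        push_cast
        linarith
      subst hv
      have hu : u = 0 := by simpa using h0
      subst hu
      exact ⟨0, 0, by simp⟩
    · refine ⟨u / (u ^ 2 - 2 * v ^ 2), -v / (u ^ 2 - 2 * v ^ 2), ?_⟩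
      have h0' : (u ^ 2 - 2 * v ^ 2 : ℂ) ≠ 0 := by exact_mod_cast h0
      apply inv_eq_of_mul_eq_one_right
      push_cast
      have : (u + v * sC : ℂ) * (u / (u ^ 2 - 2 * v ^ 2) + -v / (u ^ 2 - 2 * v ^ 2) * sC) =
          (u ^ 2 - v ^ 2 * sC ^ 2) / (u ^ 2 - 2 * v ^ 2) := by ring
      rw [this, sC_sq, div_eq_one_iff_eq h0']
      ring

theorem s_irrat (q : ℚ) : sC ≠ q := by
  intro h
  have := sC_sq
  rw [h] at this
  exact no_rat_sq 2 (by decide +kernel) q (by exact_mod_cast this)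

open IntermediateField in
theorem t_not_mem : tC ∉ ℚ⟮sC⟯ := by
  intro h
  obtain ⟨u, v, h⟩ := mem_Qs _ h
  have h2 := tC_sq
  rw [h] at h2
  by_cases huv : u * v = 0
  · rcases mul_eq_zero.1 huv with rfl | rfl
    · refine no_rat_sq 94 (by decide +kernel) (2 * v) ?_
      have : ((2 * v : ℚ) : ℂ) ^ 2 = 94 := by
        push_cast at h2 ⊢
        linear_combination 2 * h2 - 2 * (v : ℂ) ^ 2 * sC_sq
      exact_mod_cast this
    · refine no_rat_sq 47 (by decide +kernel) u ?_
      have : (u : ℂ) ^ 2 = 47 := by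
        push_cast at h2
        linear_combination h2
      exact_mod_cast this
  · refine s_irrat ((47 - u ^ 2 - 2 * v ^ 2) / (2 * (u * v))) ?_
    have : (u * v : ℂ) ≠ 0 := by exact_mod_cast huv
    push_cast
    rw [eq_div_iff (by simpa using this)]
    linear_combination h2 - (v : ℂ) ^ 2 * sC_sq

open IntermediateField in
theorem b_not_mem : bC ∉ adjoin ℚ ({sC} ∪ {tC}) := by
  intro h
  have hle : adjoin ℚ ({sC} ∪ {tC}) ≤ (Complex.ofRealAm.restrictScalars ℚ).fieldRange := by
    rw [adjoin_le_iff]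
    rintro x (rfl | rfl)
    · exact ⟨√2, rfl⟩
    · exact ⟨√47, rfl⟩
  obtain ⟨r, hr⟩ := hle h
  have := congrArg Complex.im hr
  have h7 : 0 < √(7 - √2) := Real.sqrt_pos.2 (by linarith [sqrt2_lt])
  simp [bC] at this
  exact h7.ne this

open IntermediateField in
theorem roots_field : adjoin ℚ (pFrob37.rootSet ℂ) = adjoin ℚ (({sC} ∪ {tC}) ∪ {bC}) := by
  apply le_antisymm
  · rw [adjoin_le_iff]
    set K := adjoin ℚ (({sC} ∪ {tC}) ∪ {bC}) with hK
    have hs : sC ∈ K := subset_adjoin _ _ (by simp)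
    have ht : tC ∈ K := subset_adjoin _ _ (by simp)
    have hb : bC ∈ K := subset_adjoin _ _ (by simp)
    have hb0 : bC ≠ 0 := fun h => b_not_mem (h ▸ zero_mem _)
    have hc : cC ∈ K := by
      have : cC = - tC / bC := by rw [eq_div_iff hb0, mul_comm, bc]
      rw [this]; exact div_mem (neg_mem ht) hb
    have h2 : (2 : ℂ) ∈ K := ofNat_mem K 2
    have hA : 1 + 2 * sC ∈ K := add_mem (one_mem _) (mul_mem h2 hs)
    have hB : 1 - 2 * sC ∈ K := sub_mem (one_mem _) (mul_mem h2 hs)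
    intro x hx
    rcases (root_iff x).1 hx with rfl | rfl | rfl | rfl
    · exact add_mem hA (mul_mem h2 hb)
    · exact sub_mem hA (mul_mem h2 hb)
    · exact add_mem hB (mul_mem h2 hc)
    · exact sub_mem hB (mul_mem h2 hc)
  · rw [adjoin_le_iff]
    set K := adjoin ℚ (pFrob37.rootSet ℂ) with hK
    have m1 : 1 + 2 * sC + 2 * bC ∈ K := subset_adjoin _ _ ((root_iff _).2 (by simp))
    have m2 : 1 + 2 * sC - 2 * bC ∈ K := subset_adjoin _ _ ((root_iff _).2 (by simp))
    have m3 : 1 - 2 * sC + 2 * cC ∈ K := subset_adjoin _ _ ((root_iff _).2 (by simp))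
    have m4 : 1 - 2 * sC - 2 * cC ∈ K := subset_adjoin _ _ ((root_iff _).2 (by simp))
    have h4 : (4 : ℂ) ∈ K := ofNat_mem K 4
    have h2 : (2 : ℂ) ∈ K := ofNat_mem K 2
    have hb : bC ∈ K := by
      convert div_mem (sub_mem m1 m2) h4 using 1; ring
    have hc : cC ∈ K := by
      convert div_mem (sub_mem m3 m4) h4 using 1; ring
    have hs : sC ∈ K := by
      convert div_mem (sub_mem (add_mem m1 m2) h2) h4 using 1; ring
    have ht : tC ∈ K := by
      convert neg_mem (mul_mem hb hc) using 1; rw [bc, neg_neg]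
    rintro x ((rfl | rfl) | rfl) <;> assumption

open IntermediateField in
theorem finrank_st : Module.finrank ℚ (adjoin ℚ ({sC} ∪ {tC})) = 4 := by
  have h1 : Module.finrank ℚ ℚ⟮sC⟯ = 2 := by
    refine finrank_two sC 2 (by simp [sC_sq]) ?_
    rintro ⟨q, hq⟩
    exact s_irrat q (by simpa using hq.symm)
  have h2 : Module.finrank ℚ⟮sC⟯ (adjoin ℚ⟮sC⟯ {tC}) = 2 := by
    refine finrank_two tC 47 (by rw [tC_sq, map_ofNat]) ?_
    rintro ⟨q, hq⟩
    exact t_not_mem (hq ▸ q.2)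
  have h3 := Module.finrank_mul_finrank ℚ ℚ⟮sC⟯ (adjoin ℚ⟮sC⟯ {tC})
  rw [← adjoin_adjoin_left]
  rw [h1, h2] at h3
  exact h3.symm

open IntermediateField in
theorem finrank_stb : Module.finrank ℚ (adjoin ℚ (({sC} ∪ {tC}) ∪ {bC})) = 8 := by
  have hs : sC ∈ adjoin ℚ ({sC} ∪ {tC}) := subset_adjoin _ _ (by simp)
  have h2 : Module.finrank (adjoin ℚ ({sC} ∪ {tC})) (adjoin (adjoin ℚ ({sC} ∪ {tC})) {bC}) = 2 := by
    refine finrank_two bC (-7 + ⟨sC, hs⟩) ?_ ?_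
    · rw [bC_sq, map_add, map_neg, map_ofNat]; rfl
    · rintro ⟨q, hq⟩
      exact b_not_mem (hq ▸ q.2)
  have h3 := Module.finrank_mul_finrank ℚ (adjoin ℚ ({sC} ∪ {tC}))
    (adjoin (adjoin ℚ ({sC} ∪ {tC})) {bC})
  rw [← adjoin_adjoin_left]
  rw [finrank_st, h2] at h3
  exact h3.symm

theorem card_gal : Nat.card pFrob37.Gal = 8 := by
  rw [Gal.card_of_separable irr.separable]
  have : pFrob37.IsSplittingField ℚ (IntermediateField.adjoin ℚ (pFrob37.rootSet ℂ)) :=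
    IntermediateField.adjoin_rootSet_isSplittingField (IsAlgClosed.splits (pFrob37.map (algebraMap ℚ ℂ)))
  have e := IsSplittingField.algEquiv (IntermediateField.adjoin ℚ (pFrob37.rootSet ℂ)) pFrob37
  have h := e.toLinearEquiv.finrank_eq
  rw [roots_field, finrank_stb] at h
  exact h.symm

/-- `x⁴ - 4x³ + 46x² - 148x + 1369` is irreducible over `ℚ` and its Galois group
(the Galois group of its splitting field over `ℚ`) is dihedral of order 8. -/
theorem pFrob37_irreducible_and_gal_dihedral :
    Irreducible pFrob37 ∧ Nonempty (pFrob37.Gal ≃* DihedralGroup 4) := by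
  exact ⟨irr, iso_of_card card_gal⟩
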